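/- Let s ∈ ℕ with s ≥ 2, and let p ∈ ℝ with 1/2 ≤ p < 1. Then Li*_{{1}_s}(1−p, {1}_{s−1}) = −Li_s(1 − 1/p), where Li_s(x) = Σ_{n≥1} x^n/n^s is the one-dimensional polylogarithm. -/

import Mathlib

/-- One-dimensional polylogarithm `Li_s(x) = ∑_{n≥1} x^n/n^s`. -/
noncomputable def Li (s : ℕ) (x : ℝ) : ℝ := ∑' n : ℕ, x ^ (n + 1) / (n + 1 : ℝ) ^ s

/-- Multiple polylogarithm
`Li*_{s₁,…,s_d}(x₁,…,x_d) = ∑_{n₁ ≥ ⋯ ≥ n_d ≥ 1} ∏ᵢ xᵢ^{nᵢ}/nᵢ^{sᵢ}`. -/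
noncomputable def LiStar (s : List ℕ) (x : List ℝ) : ℝ :=
  ∑' m : {m : Fin s.length → ℕ // (∀ i j : Fin s.length, i ≤ j → m j ≤ m i) ∧ ∀ i, 1 ≤ m i},
    ∏ i : Fin s.length, x.getD (i : ℕ) 0 ^ m.1 i / (m.1 i : ℝ) ^ s.get i

/-!
Summing over `n₁` last, `Li*_{{1}_s}(x, {1}_{s-1})` is a power series in `x` whose coefficients are
nested harmonic sums divided by `n₁`. If `b'` is the binomial transform of `b`, then `(j + 1) * b j`
has transform `(n + 1) * b' n - n * b' (n - 1)`; hence dividing repeatedly by `j + 1`, starting from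
the constant sequence `1`, nests harmonic sums, and the coefficients above are the transform of
`1 / (j + 1) ^ s`. Euler's series transformation, which relates the power series of `b'` at `x` to
that of `b` at `x / (x - 1)`, gives `-Li_s(x / (x - 1))`; for `x = 1 - p` this argument is
`1 - 1 / p`.
-/

open Finset Filter
open scoped Topology

section BinomialTransform

variable {R : Type*} [CommRing R]

/-- The binomial (Euler) transform `n ↦ ∑_{j ≤ n} (-1)^j * C(n, j) * b j` of a sequence, with the
sign convention that makes it an involution. -/
def binomialTransform (b : ℕ → R) (n : ℕ) : R :=
  ∑ j ∈ range (n + 1), (-1) ^ j * n.choose j * b j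

theorem binomialTransform_eq_fwdDiff_iter (b : ℕ → R) (n : ℕ) :
    binomialTransform b n = (-1) ^ n * (fwdDiff 1)^[n] b 0 := by
  rw [binomialTransform, fwdDiff_iter_eq_sum_shift, mul_sum]
  refine sum_congr rfl fun j hj => ?_
  have hsign : (-1 : R) ^ n * (-1) ^ (n - j) = (-1) ^ j := by
    obtain ⟨k, rfl⟩ := Nat.exists_eq_add_of_le (mem_range_succ_iff.mp hj)
    rw [Nat.add_sub_cancel_left, pow_add, mul_assoc, ← mul_pow, neg_one_mul, neg_neg, one_pow,
      mul_one]
  rw [← hsign, zsmul_eq_mul, smul_eq_mul, mul_one, zero_add]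
  push_cast
  ring

theorem binomialTransform_involutive :
    Function.Involutive (binomialTransform : (ℕ → R) → ℕ → R) := by
  intro b
  ext n
  have hshift := shift_eq_sum_fwdDiff_iter 1 b n 0
  rw [smul_eq_mul, mul_one, zero_add] at hshift
  rw [hshift, binomialTransform]
  refine sum_congr rfl fun j _ => ?_
  rw [binomialTransform_eq_fwdDiff_iter, nsmul_eq_mul]
  have hsign : (-1 : R) ^ j * (-1) ^ j = 1 := by rw [← mul_pow, neg_one_mul, neg_neg, one_pow]
  linear_combination (n.choose j * (fwdDiff 1)^[j] b 0) * hsign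

theorem binomialTransform_one (n : ℕ) :
    binomialTransform (1 : ℕ → R) n = if n = 0 then 1 else 0 := by
  simp only [binomialTransform, Pi.one_apply, mul_one]
  exact_mod_cast congrArg (Int.cast : ℤ → R) (Int.alternating_sum_range_choose (n := n))

theorem binomialTransform_succ_add_one_mul (b : ℕ → R) (n : ℕ) :
    binomialTransform (fun j => (j + 1) * b j) (n + 1) =
      (n + 2) * binomialTransform b (n + 1) - (n + 1) * binomialTransform b n := by
  have hpad : binomialTransform b n =
      ∑ j ∈ range (n + 1 + 1), (-1) ^ j * (n.choose j : R) * b j := by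
    rw [sum_range_succ, Nat.choose_succ_self, Nat.cast_zero, mul_zero, zero_mul, add_zero,
      binomialTransform]
  rw [hpad, binomialTransform, binomialTransform, mul_sum, mul_sum, ← sum_sub_distrib]
  refine sum_congr rfl fun j hj => ?_
  have hchoose : (n.choose j : R) * (n + 1) = (n + 1).choose j * (n + 1 - j) := by
    have := congrArg (Nat.cast : ℕ → R) (Nat.choose_mul_succ_eq n j)
    rw [Nat.cast_mul, Nat.cast_mul, Nat.cast_sub (mem_range_succ_iff.mp hj)] at this
    exact_mod_cast this
  linear_combination (-1) ^ j * b j * hchoose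

theorem sum_binomialTransform_add_one_mul (b : ℕ → R) (n : ℕ) :
    ∑ i ∈ range (n + 1), binomialTransform (fun j => (j + 1) * b j) i =
      (n + 1) * binomialTransform b n := by
  induction n with
  | zero => simp [binomialTransform]
  | succ n ih =>
    rw [sum_range_succ, ih, binomialTransform_succ_add_one_mul]
    push_cast
    ring

end BinomialTransform

section GeneratingFunction

variable {x : ℝ}

theorem hasSum_choose_mul_pow_succ (hx : |x| < 1) (j : ℕ) :
    HasSum (fun n : ℕ => (n.choose j : ℝ) * x ^ (n + 1)) ((x / (1 - x)) ^ (j + 1)) := by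
  have hlow : ∑ n ∈ range j, (n.choose j : ℝ) * x ^ (n + 1) = 0 :=
    sum_eq_zero fun n hn => by
      rw [Nat.choose_eq_zero_of_lt (mem_range.mp hn), Nat.cast_zero, zero_mul]
  rw [← hasSum_nat_add_iff' j, hlow, sub_zero]
  convert! (hasSum_choose_mul_geometric_of_norm_lt_one j hx).mul_left (x ^ (j + 1)) using 1
  · exact funext fun n => by ring
  · rw [div_pow, mul_one_div]

theorem summable_mul_choose_mul_pow_prod {b : ℕ → ℝ} (hx₀ : 0 ≤ x) (hx₁ : x < 1)
    (hb : Summable fun j => b j * (x / (1 - x)) ^ (j + 1)) :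
    Summable fun q : ℕ × ℕ => (-1) ^ q.1 * b q.1 * (q.2.choose q.1 * x ^ (q.2 + 1)) := by
  have hrow (j : ℕ) : HasSum (fun n : ℕ => |b j| * (n.choose j * x ^ (n + 1)))
      (|b j| * (x / (1 - x)) ^ (j + 1)) :=
    (hasSum_choose_mul_pow_succ (by rwa [abs_of_nonneg hx₀]) j).mul_left _
  have habs : Summable fun q : ℕ × ℕ => |b q.1| * (q.2.choose q.1 * x ^ (q.2 + 1)) := by
    refine (summable_prod_of_nonneg fun _ => by positivity).mpr
      ⟨fun j => (hrow j).summable, ?_⟩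
    have hy : 0 ≤ x / (1 - x) := div_nonneg hx₀ (sub_nonneg.mpr hx₁.le)
    refine hb.abs.congr fun j => ?_
    rw [(hrow j).tsum_eq, abs_mul, abs_of_nonneg (pow_nonneg hy _)]
  refine habs.of_norm_bounded fun q => le_of_eq ?_
  rw [Real.norm_eq_abs, abs_mul, abs_mul, abs_pow, abs_neg, abs_one, one_pow, one_mul,
    abs_of_nonneg (a := _ * x ^ _) (by positivity)]

theorem tsum_binomialTransform_mul_pow_of_nonneg {b : ℕ → ℝ} (hx₀ : 0 ≤ x) (hx₁ : x < 1)
    (hb : Summable fun j => b j * (x / (x - 1)) ^ (j + 1)) :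
    ∑' n, binomialTransform b n * x ^ (n + 1) = -∑' j, b j * (x / (x - 1)) ^ (j + 1) := by
  have hneg : x / (x - 1) = -(x / (1 - x)) := by rw [← neg_sub, div_neg]
  have hb' : Summable fun j => b j * (x / (1 - x)) ^ (j + 1) := by
    refine hb.abs.of_norm_bounded fun j => le_of_eq ?_
    rw [hneg, Real.norm_eq_abs, abs_mul, abs_mul, abs_pow, abs_pow, abs_neg]
  calc ∑' n, binomialTransform b n * x ^ (n + 1)
      = ∑' n : ℕ, ∑' j : ℕ, (-1) ^ j * b j * (n.choose j * x ^ (n + 1)) := by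
        refine tsum_congr fun n => ?_
        rw [tsum_eq_sum (s := range (n + 1)), binomialTransform, sum_mul]
        · exact sum_congr rfl fun j _ => by ring
        · intro j hj
          rw [Nat.choose_eq_zero_of_lt (by simpa using hj), Nat.cast_zero, zero_mul, mul_zero]
    _ = ∑' j : ℕ, ∑' n : ℕ, (-1) ^ j * b j * (n.choose j * x ^ (n + 1)) :=
        (summable_mul_choose_mul_pow_prod hx₀ hx₁ hb').tsum_comm
    _ = -∑' j, b j * (x / (x - 1)) ^ (j + 1) := by
        rw [← tsum_neg]
        refine tsum_congr fun j => ?_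
        rw [tsum_mul_left, (hasSum_choose_mul_pow_succ (by rwa [abs_of_nonneg hx₀]) j).tsum_eq,
          hneg, neg_pow (x / (1 - x))]
        ring

-- For `x < 0` the double series need not converge absolutely. But `x ↦ x / (x - 1)` is an
-- involution exchanging `x < 0` with `0 < x < 1`, so the case `0 ≤ x` applies to the transform
-- of `b`.
theorem tsum_binomialTransform_mul_pow {b : ℕ → ℝ} (hx : x < 1)
    (hbx : Summable fun n => binomialTransform b n * x ^ (n + 1))
    (hb : Summable fun j => b j * (x / (x - 1)) ^ (j + 1)) :
    ∑' n, binomialTransform b n * x ^ (n + 1) = -∑' j, b j * (x / (x - 1)) ^ (j + 1) := by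
  rcases le_or_gt 0 x with hx₀ | hx₀
  · exact tsum_binomialTransform_mul_pow_of_nonneg hx₀ hx hb
  set z := x / (x - 1) with hz
  have hx1 : x - 1 < 0 := by linarith
  have hz₀ : 0 ≤ z := div_nonneg_of_nonpos hx₀.le hx1.le
  have hz₁ : z < 1 := by rw [hz, div_lt_one_of_neg hx1]; linarith
  have hzx : z / (z - 1) = x := by
    rw [hz]
    field_simp [hx1.ne]
    ring
  have h := tsum_binomialTransform_mul_pow_of_nonneg (b := binomialTransform b) hz₀ hz₁
    (by rwa [hzx])
  rw [binomialTransform_involutive, hzx] at h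
  rw [h, neg_neg]

end GeneratingFunction

/-- The index tuples `N ≥ n₁ ≥ ⋯ ≥ n_d ≥ 1` of a truncated multiple polylogarithm. -/
def antitoneTuples (d N : ℕ) : Finset (Fin d → ℕ) :=
  {m ∈ Fintype.piFinset fun _ => Icc 1 N | Antitone m}

theorem mem_antitoneTuples {d N : ℕ} {m : Fin d → ℕ} :
    m ∈ antitoneTuples d N ↔ (∀ i, 1 ≤ m i ∧ m i ≤ N) ∧ Antitone m := by
  simp only [antitoneTuples, mem_filter, Fintype.mem_piFinset, mem_Icc]

theorem antitoneTuples_mono (d : ℕ) : Monotone (antitoneTuples d) := by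
  intro N M hNM m hm
  rw [mem_antitoneTuples] at hm ⊢
  exact ⟨fun i => ⟨(hm.1 i).1, (hm.1 i).2.trans hNM⟩, hm.2⟩

theorem card_antitoneTuples_le (d N : ℕ) : #(antitoneTuples d N) ≤ N ^ d := by
  refine (card_filter_le _ _).trans_eq ?_
  rw [Fintype.card_piFinset_const, Nat.card_Icc, Nat.add_sub_cancel]

theorem antitone_cons_iff {α : Type*} [Preorder α] {d : ℕ} {n : α} {m : Fin d → α} :
    Antitone (Fin.cons n m : Fin (d + 1) → α) ↔ (∀ i, m i ≤ n) ∧ Antitone m := by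
  simp [Antitone, Fin.forall_fin_succ, forall_and]

theorem cons_mem_antitoneTuples {d N n : ℕ} {m : Fin d → ℕ} :
    Fin.cons n m ∈ antitoneTuples (d + 1) N ↔ (1 ≤ n ∧ n ≤ N) ∧ m ∈ antitoneTuples d n := by
  simp only [mem_antitoneTuples, antitone_cons_iff, Fin.forall_fin_succ, Fin.cons_zero,
    Fin.cons_succ]
  exact ⟨fun h => ⟨h.1.1, fun i => ⟨(h.1.2 i).1, h.2.1 i⟩, h.2.2⟩,
    fun h => ⟨⟨h.1, fun i => ⟨(h.2.1 i).1, (h.2.1 i).2.trans h.1.2⟩⟩, fun i => (h.2.1 i).2, h.2.2⟩⟩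

theorem sum_antitoneTuples_succ {M : Type*} [AddCommMonoid M] {d : ℕ}
    (f : (Fin (d + 1) → ℕ) → M) (N : ℕ) :
    ∑ m ∈ antitoneTuples (d + 1) N, f m =
      ∑ n ∈ range N, ∑ m ∈ antitoneTuples d (n + 1), f (Fin.cons (n + 1) m) := by
  rw [sum_sigma']
  symm
  refine sum_bij (fun q _ => Fin.cons (q.1 + 1) q.2) (fun q hq => ?_) (fun q _ r _ h => ?_)
    (fun m hm => ?_) fun _ _ => rfl
  · rw [mem_sigma, mem_range] at hq
    exact cons_mem_antitoneTuples.mpr ⟨⟨Nat.le_add_left 1 _, hq.1⟩, hq.2⟩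
  · obtain ⟨hhead, htail⟩ := Fin.cons_injective2 h
    exact Sigma.ext (Nat.succ_injective hhead) (heq_of_eq htail)
  · rw [← Fin.cons_self_tail m, cons_mem_antitoneTuples] at hm
    obtain ⟨n, hn⟩ := Nat.exists_eq_add_of_le' hm.1.1
    rw [hn] at hm
    exact ⟨⟨n, Fin.tail m⟩, mem_sigma.mpr ⟨mem_range.mpr hm.1.2, hm.2⟩, by
      rw [← hn, Fin.cons_self_tail]⟩

/-- The summand `∏ᵢ xᵢ^{nᵢ}/nᵢ^{sᵢ}` of `LiStar s x`. -/
noncomputable def liStarTerm (s : List ℕ) (x : List ℝ) (m : Fin s.length → ℕ) : ℝ :=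
  ∏ i : Fin s.length, x.getD (i : ℕ) 0 ^ m i / (m i : ℝ) ^ s.get i

/-- The partial sum of `LiStar s x` over the tuples with `n₁ ≤ N`. -/
noncomputable def truncLiStar (s : List ℕ) (x : List ℝ) (N : ℕ) : ℝ :=
  ∑ m ∈ antitoneTuples s.length N, liStarTerm s x m

theorem liStarTerm_cons (a : ℕ) (s : List ℕ) (t : ℝ) (x : List ℝ) (n : ℕ)
    (m : Fin s.length → ℕ) :
    liStarTerm (a :: s) (t :: x) (Fin.cons n m : Fin (s.length + 1) → ℕ) =
      t ^ n / (n : ℝ) ^ a * liStarTerm s x m :=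
  Fin.prod_univ_succ _

theorem abs_liStarTerm (s : List ℕ) (x : List ℝ) (m : Fin s.length → ℕ) :
    |liStarTerm s x m| = liStarTerm s (x.map abs) m := by
  rw [liStarTerm, abs_prod, liStarTerm]
  refine prod_congr rfl fun i _ => ?_
  rw [abs_div, abs_pow, abs_pow, Nat.abs_cast, ← abs_zero, List.getD_map, abs_zero]

theorem abs_liStarTerm_le_one {x : List ℝ} (hx : ∀ t ∈ x, |t| ≤ 1) (s : List ℕ)
    (m : Fin s.length → ℕ) : |liStarTerm s x m| ≤ 1 := by
  rw [liStarTerm, abs_prod]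
  refine prod_le_one (fun i _ => abs_nonneg _) fun i _ => ?_
  have hxi : |x.getD i 0| ≤ 1 := by
    rcases lt_or_ge (i : ℕ) x.length with hi | hi
    · rw [List.getD_eq_getElem _ _ hi]
      exact hx _ (List.getElem_mem hi)
    · rw [List.getD_eq_default _ _ hi, abs_zero]
      exact zero_le_one
  rw [abs_div, abs_pow, abs_pow, Nat.abs_cast, div_eq_mul_inv, ← Nat.cast_pow]
  exact mul_le_one₀ (pow_le_one₀ (abs_nonneg _) hxi) (by positivity) (Nat.cast_inv_le_one _)

theorem truncLiStar_nil (x : List ℝ) (N : ℕ) : truncLiStar [] x N = 1 := by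
  simp [truncLiStar, liStarTerm, antitoneTuples, Antitone]

theorem truncLiStar_cons (a : ℕ) (s : List ℕ) (t : ℝ) (x : List ℝ) (N : ℕ) :
    truncLiStar (a :: s) (t :: x) N =
      ∑ n ∈ range N, t ^ (n + 1) / (n + 1 : ℝ) ^ a * truncLiStar s x (n + 1) := by
  refine (sum_antitoneTuples_succ (liStarTerm (a :: s) (t :: x)) N).trans ?_
  refine sum_congr rfl fun n _ => ?_
  simp only [liStarTerm_cons, truncLiStar, mul_sum, Nat.cast_add_one]

theorem abs_truncLiStar_le {x : List ℝ} (hx : ∀ t ∈ x, |t| ≤ 1) (s : List ℕ) (N : ℕ) :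
    |truncLiStar s x N| ≤ (N : ℝ) ^ s.length :=
  calc |truncLiStar s x N|
      ≤ ∑ m ∈ antitoneTuples s.length N, |liStarTerm s x m| := abs_sum_le_sum_abs _ _
    _ ≤ #(antitoneTuples s.length N) • (1 : ℝ) :=
        sum_le_card_nsmul _ _ _ fun m _ => abs_liStarTerm_le_one hx s m
    _ ≤ (N : ℝ) ^ s.length := by
        rw [nsmul_one]
        exact_mod_cast card_antitoneTuples_le s.length N

theorem summable_pow_div_pow_mul_truncLiStar (a : ℕ) (s : List ℕ) {t : ℝ} (ht : |t| < 1)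
    {x : List ℝ} (hx : ∀ u ∈ x, |u| ≤ 1) :
    Summable fun n : ℕ => t ^ (n + 1) / (n + 1 : ℝ) ^ a * truncLiStar s x (n + 1) := by
  have hgeom : Summable fun n : ℕ => ((n + 1 : ℕ) : ℝ) ^ s.length * |t| ^ (n + 1) :=
    (summable_nat_add_iff (f := fun n : ℕ => (n : ℝ) ^ s.length * |t| ^ n) 1).mpr
      (summable_pow_mul_geometric_of_norm_lt_one s.length (by rwa [norm_abs_eq_norm]))
  refine hgeom.of_norm_bounded fun n => ?_
  have hcoeff : |t ^ (n + 1) / (n + 1 : ℝ) ^ a| ≤ |t| ^ (n + 1) := by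
    rw [← Nat.cast_add_one, ← Nat.cast_pow, div_eq_mul_inv, abs_mul, abs_pow, abs_inv,
      Nat.abs_cast]
    exact mul_le_of_le_one_right (by positivity) (Nat.cast_inv_le_one _)
  rw [Real.norm_eq_abs, abs_mul, mul_comm]
  exact mul_le_mul (abs_truncLiStar_le hx s (n + 1)) hcoeff (abs_nonneg _) (by positivity)

/-- The index type of the sum defining `LiStar`: the tuples `n₁ ≥ ⋯ ≥ n_d ≥ 1`. -/
abbrev LiStarIndex (d : ℕ) : Type :=
  {m : Fin d → ℕ // (∀ i j : Fin d, i ≤ j → m j ≤ m i) ∧ ∀ i, 1 ≤ m i}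

theorem exists_mem_antitoneTuples {d : ℕ} (m : LiStarIndex d) : ∃ N, m.1 ∈ antitoneTuples d N :=
  ⟨∑ i, m.1 i, mem_antitoneTuples.mpr
    ⟨fun i => ⟨m.2.2 i, single_le_sum_of_canonicallyOrdered (mem_univ i)⟩, fun i j => m.2.1 i j⟩⟩

theorem tendsto_antitoneTuples_subtype_atTop (d : ℕ) :
    Tendsto (fun N => (antitoneTuples d N).subtype _ : ℕ → Finset (LiStarIndex d)) atTop atTop :=
  tendsto_atTop_finset_of_monotone
    (fun _ _ hNM => subtype_mono (antitoneTuples_mono d hNM))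
    fun m => (exists_mem_antitoneTuples m).imp fun _ hm => mem_subtype.mpr hm

theorem sum_subtype_antitoneTuples_liStarTerm (s : List ℕ) (x : List ℝ) (N : ℕ) :
    ∑ m ∈ ((antitoneTuples s.length N).subtype _ : Finset (LiStarIndex s.length)),
      liStarTerm s x m.1 = truncLiStar s x N :=
  sum_subtype_of_mem _ fun m hm => by
    rw [mem_antitoneTuples] at hm
    exact ⟨fun i j => @hm.2 i j, fun i => (hm.1 i).1⟩

theorem summable_liStarTerm (a : ℕ) (s : List ℕ) {t : ℝ} (ht : |t| < 1) {x : List ℝ}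
    (hx : ∀ u ∈ x, |u| ≤ 1) :
    Summable fun m : LiStarIndex (a :: s).length => liStarTerm (a :: s) (t :: x) m.1 := by
  have hmajorant : Summable fun n : ℕ =>
      |t| ^ (n + 1) / (n + 1 : ℝ) ^ a * truncLiStar s (x.map abs) (n + 1) :=
    summable_pow_div_pow_mul_truncLiStar a s (by rwa [abs_abs]) (by simpa using hx)
  refine Summable.of_abs (summable_of_sum_le (c := ∑' n : ℕ,
    |t| ^ (n + 1) / (n + 1 : ℝ) ^ a * truncLiStar s (x.map abs) (n + 1))
    (fun _ => abs_nonneg _) fun u => ?_)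
  obtain ⟨N, hN⟩ := ((tendsto_antitoneTuples_subtype_atTop _).eventually_ge_atTop u).exists
  calc ∑ m ∈ u, |liStarTerm (a :: s) (t :: x) m.1|
      ≤ ∑ m ∈ (antitoneTuples (a :: s).length N).subtype _,
          |liStarTerm (a :: s) (t :: x) m.1| :=
        sum_le_sum_of_subset_of_nonneg hN fun _ _ _ => abs_nonneg _
    _ = ∑ n ∈ range N, |t| ^ (n + 1) / (n + 1 : ℝ) ^ a * truncLiStar s (x.map abs) (n + 1) := by
        simp only [abs_liStarTerm]
        rw [sum_subtype_antitoneTuples_liStarTerm, List.map_cons, truncLiStar_cons]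
    _ ≤ _ := hmajorant.sum_le_tsum _ fun n _ => mul_nonneg (by positivity) <|
        sum_nonneg fun m _ => abs_liStarTerm s x m ▸ abs_nonneg _

theorem tendsto_truncLiStar {s : List ℕ} {x : List ℝ}
    (h : Summable fun m : LiStarIndex s.length => liStarTerm s x m.1) :
    Tendsto (truncLiStar s x) atTop (𝓝 (LiStar s x)) := by
  refine (h.hasSum.comp (tendsto_antitoneTuples_subtype_atTop s.length)).congr fun N => ?_
  exact sum_subtype_antitoneTuples_liStarTerm s x N

theorem liStar_cons (a : ℕ) (s : List ℕ) {t : ℝ} (ht : |t| < 1) {x : List ℝ}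
    (hx : ∀ u ∈ x, |u| ≤ 1) :
    LiStar (a :: s) (t :: x) =
      ∑' n : ℕ, t ^ (n + 1) / (n + 1 : ℝ) ^ a * truncLiStar s x (n + 1) := by
  refine tendsto_nhds_unique (tendsto_truncLiStar (summable_liStarTerm a s ht hx)) ?_
  refine (summable_pow_div_pow_mul_truncLiStar a s ht hx).hasSum.tendsto_sum_nat.congr fun N => ?_
  exact (truncLiStar_cons a s t x N).symm

theorem binomialTransform_one_div_pow (k n : ℕ) :
    binomialTransform (fun j => 1 / (j + 1 : ℝ) ^ (k + 1)) n =
      truncLiStar (List.replicate k 1) (List.replicate k 1) (n + 1) / (n + 1) := by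
  have hlower (k j : ℕ) : (j + 1 : ℝ) * (1 / (j + 1 : ℝ) ^ (k + 1)) = 1 / (j + 1 : ℝ) ^ k := by
    field_simp
    ring
  rw [eq_div_iff (by positivity), mul_comm, ← sum_binomialTransform_add_one_mul]
  simp only [hlower]
  induction k generalizing n with
  | zero =>
    simp [truncLiStar_nil, ← Pi.one_def, binomialTransform_one]
  | succ k ih =>
    rw [List.replicate_succ, List.replicate_succ, truncLiStar_cons]
    refine sum_congr rfl fun i _ => ?_
    rw [one_pow, pow_one, ← ih, one_div_mul_eq_div, eq_div_iff (by positivity), mul_comm,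
      ← sum_binomialTransform_add_one_mul]
    simp only [hlower]

theorem abs_le_one_of_mem_replicate_one (k : ℕ) : ∀ u ∈ List.replicate k (1 : ℝ), |u| ≤ 1 := by
  intro u hu
  rw [List.eq_of_mem_replicate hu, abs_one]

theorem liStar_replicate_one_eq_neg_li (d : ℕ) {x : ℝ} (hx : |x| < 1)
    (hLi : Summable fun n : ℕ => (x / (x - 1)) ^ (n + 1) / (n + 1 : ℝ) ^ (d + 1)) :
    LiStar (1 :: List.replicate d 1) (x :: List.replicate d (1 : ℝ)) =
      -Li (d + 1) (x / (x - 1)) := by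
  have hterm (n : ℕ) : x ^ (n + 1) / (n + 1 : ℝ) ^ 1 *
        truncLiStar (List.replicate d 1) (List.replicate d 1) (n + 1) =
      binomialTransform (fun j => 1 / (j + 1 : ℝ) ^ (d + 1)) n * x ^ (n + 1) := by
    rw [binomialTransform_one_div_pow]
    ring
  have hsummable :=
    summable_pow_div_pow_mul_truncLiStar 1 (List.replicate d 1) hx
      (abs_le_one_of_mem_replicate_one d)
  rw [liStar_cons 1 _ hx (abs_le_one_of_mem_replicate_one d)]
  simp only [hterm] at hsummable ⊢
  simp only [Li, ← one_div_mul_eq_div _ (_ ^ (_ + 1))] at hLi ⊢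
  exact tsum_binomialTransform_mul_pow (abs_lt.mp hx).2 hsummable hLi

theorem summable_pow_div_pow {s : ℕ} {y : ℝ} (hy : |y| ≤ 1) (h : 2 ≤ s ∨ |y| < 1) :
    Summable fun n : ℕ => y ^ (n + 1) / (n + 1 : ℝ) ^ s := by
  suffices hshift : Summable fun n : ℕ => y ^ n / (n : ℝ) ^ s by
    exact_mod_cast (summable_nat_add_iff 1).mpr hshift
  have hfactor (n : ℕ) : ‖y ^ n / (n : ℝ) ^ s‖ = |y| ^ n * ((n ^ s : ℕ) : ℝ)⁻¹ := by
    rw [Real.norm_eq_abs, abs_div, abs_pow, abs_pow, Nat.abs_cast, Nat.cast_pow, div_eq_mul_inv]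
  rcases h with hs | hy
  · refine (Real.summable_nat_pow_inv.mpr hs).of_norm_bounded fun n => ?_
    rw [hfactor, Nat.cast_pow]
    exact mul_le_of_le_one_left (by positivity) (pow_le_one₀ (abs_nonneg _) hy)
  · refine (summable_geometric_of_lt_one (abs_nonneg y) hy).of_norm_bounded fun n => ?_
    rw [hfactor]
    exact mul_le_of_le_one_right (by positivity) (Nat.cast_inv_le_one _)

theorem stmt_10_general (s : ℕ) (hs : 1 ≤ s) (p : ℝ) (hp1 : 1 / 2 ≤ p) (hp2 : p < 2)
    (h : 2 ≤ s ∨ 1 / 2 < p) :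
    LiStar (List.replicate s 1) ((1 - p) :: List.replicate (s - 1) (1 : ℝ)) =
      -Li s (1 - 1 / p) := by
  obtain ⟨d, rfl⟩ := Nat.exists_eq_add_of_le' hs
  have hp0 : 0 < p := by linarith
  have harg : (1 - p) / (1 - p - 1) = 1 - 1 / p := by
    rw [sub_sub_cancel_left, div_neg, sub_div, div_self hp0.ne', neg_sub]
  have hinv : 1 / p ≤ 2 := (one_div_le hp0 two_pos).mpr hp1
  have hinv0 : 0 < 1 / p := one_div_pos.mpr hp0
  have hLi := summable_pow_div_pow (s := d + 1) (abs_le.mpr ⟨by linarith, by linarith⟩) <|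
    h.imp_right fun hp : 1 / 2 < p => abs_lt.mpr
      ⟨by linarith [(one_div_lt hp0 two_pos).mpr hp], sub_lt_self 1 hinv0⟩
  rw [← harg] at hLi ⊢
  exact liStar_replicate_one_eq_neg_li d (abs_lt.mpr ⟨by linarith, by linarith⟩) hLi

/-- Reduction of `Li*_{{1}_s}(1−p, {1}_{s−1})` to a one-dimensional
polylogarithm. -/
theorem stmt_10 (s : ℕ) (hs : 2 ≤ s) (p : ℝ) (hp1 : 1 / 2 ≤ p) (hp2 : p < 1) :
    LiStar (List.replicate s 1) ((1 - p) :: List.replicate (s - 1) (1 : ℝ)) =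
      -Li s (1 - 1 / p) := by
  exact stmt_10_general s (one_le_two.trans hs) p hp1 (hp2.trans one_lt_two) (Or.inl hs)
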